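/- Let n ≥ 3 be an integer, s₀ ∈ ℝ, f₀ ∈ ℝ, and f₁ ∈ (−1, 1). There exists a twice continuously differentiable function f : ℝ → ℝ with f(s₀) = f₀ and f'(s₀) = f₁, such that f'(s) ∈ (−1, 1) for every s ∈ ℝ, and f''(s) = (f'(s)² − 1)·(1 + (n−1)·tanh(s)·f'(s)) for every s ∈ ℝ. -/

import Mathlib

theorem aux_hasDerivAt_tanh (x : ℝ) : HasDerivAt Real.tanh (1 - Real.tanh x ^ 2) x := by
  have h := (Real.hasDerivAt_sinh x).div (Real.hasDerivAt_cosh x) (Real.cosh_pos x).ne'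
  have e : Real.tanh = Real.sinh / Real.cosh := by
    funext y
    simp [Real.tanh_eq_sinh_div_cosh]
  rw [← e] at h
  refine h.congr_deriv ?_
  rw [Real.tanh_eq_sinh_div_cosh]
  have := (Real.cosh_pos x).ne'
  field_simp

theorem aux_continuous_tanh : Continuous Real.tanh :=
  continuous_iff_continuousAt.2 fun x => (aux_hasDerivAt_tanh x).continuousAt

theorem aux_tanh_lipschitz : LipschitzWith 1 Real.tanh := by
  apply lipschitzWith_of_nnnorm_deriv_le (fun x => (aux_hasDerivAt_tanh x).differentiableAt)
  intro x
  rw [(aux_hasDerivAt_tanh x).deriv]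
  rw [← NNReal.coe_le_coe, coe_nnnorm, Real.norm_eq_abs, NNReal.coe_one, abs_le]
  have h := Real.abs_tanh_lt_one x
  have h2 : Real.tanh x ^ 2 ≤ 1 := by
    rw [sq_le_one_iff_abs_le_one]; exact h.le
  constructor <;> nlinarith [sq_nonneg (Real.tanh x)]

/-- Global existence for a bounded, uniformly Lipschitz time-dependent scalar field. -/
theorem aux_global (v : ℝ → ℝ → ℝ) (K L : NNReal) (hK : ∀ t, LipschitzWith K (v t))
    (hc : ∀ x, Continuous (v · x)) (hL : ∀ t x, ‖v t x‖ ≤ L) (t₀ x₀ : ℝ) :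
    ∃ u : ℝ → ℝ, u t₀ = x₀ ∧ ∀ t, HasDerivAt u (v t (u t)) t := by
  have loc : ∀ N : ℕ, ∃ α : ℝ → ℝ, α t₀ = x₀ ∧
      ∀ t ∈ Set.Ioo (t₀ - (N + 1)) (t₀ + (N + 1)), HasDerivAt α (v t (α t)) t := by
    intro N
    have hN : (0 : ℝ) < N + 1 := by positivity
    have hpl : IsPicardLindelof v (tmin := t₀ - (N + 1)) (tmax := t₀ + (N + 1))
        ⟨t₀, by constructor <;> linarith⟩ x₀ (L * (N + 1)) 0 L K :=
      { lipschitzOnWith := fun t _ => (hK t).lipschitzOnWith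
        continuousOn := fun x _ => (hc x).continuousOn
        norm_le := fun t _ x _ => hL t x
        mul_max_le := by simp }
    obtain ⟨α, h0, h1⟩ := hpl.exists_eq_forall_mem_Icc_hasDerivWithinAt₀
    exact ⟨α, h0, fun t ht => (h1 t (Set.Ioo_subset_Icc_self ht)).hasDerivAt
      (Icc_mem_nhds ht.1 ht.2)⟩
  choose α h0 h1 using loc
  have compat : ∀ M N : ℕ, M ≤ N → ∀ t ∈ Set.Ioo (t₀ - (M + 1)) (t₀ + (M + 1)),
      α M t = α N t := by
    intro M N hMN t ht
    have hMN' : (M : ℝ) ≤ N := by exact_mod_cast hMN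
    have hM : (0 : ℝ) < M + 1 := by positivity
    refine ODE_solution_unique_of_mem_Ioo (v := v) (s := fun _ => Set.univ) (K := K)
      (t₀ := t₀) (fun t _ => (hK t).lipschitzOnWith) ⟨by linarith, by linarith⟩
      (fun t ht => ⟨h1 M t ht, trivial⟩)
      (fun t ht => ⟨h1 N t ⟨by linarith [ht.1], by linarith [ht.2]⟩, trivial⟩)
      (by rw [h0, h0]) ht
  let u : ℝ → ℝ := fun t => α ⌈|t - t₀|⌉₊ t
  have hu : ∀ N : ℕ, ∀ t ∈ Set.Ioo (t₀ - (N + 1)) (t₀ + (N + 1)), u t = α N t := by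
    intro N t ht
    have hm : |t - t₀| < (⌈|t - t₀|⌉₊ : ℝ) + 1 := by linarith [Nat.le_ceil |t - t₀|]
    have hm' := abs_lt.1 hm
    rcases le_total ⌈|t - t₀|⌉₊ N with h | h
    · exact compat _ _ h t ⟨by linarith [hm'.1], by linarith [hm'.2]⟩
    · exact (compat _ _ h t ht).symm
  refine ⟨u, h0 _, fun t => ?_⟩
  have hm : |t - t₀| < (⌈|t - t₀|⌉₊ : ℝ) + 1 := by linarith [Nat.le_ceil |t - t₀|]
  have hm' := abs_lt.1 hm
  have ht : t ∈ Set.Ioo (t₀ - ((⌈|t - t₀|⌉₊ : ℝ) + 1)) (t₀ + ((⌈|t - t₀|⌉₊ : ℝ) + 1)) :=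
    ⟨by linarith [hm'.1], by linarith [hm'.2]⟩
  have h := h1 _ t ht
  refine h.congr_of_eventuallyEq ?_
  filter_upwards [isOpen_Ioo.mem_nhds ht] with y hy
  exact hu _ y hy

/-- Entire spacelike rotationally symmetric translating solitons in dS^n × ℝ. -/
theorem stmt_6 (n : ℕ) (hn : 3 ≤ n) (s₀ f₀ : ℝ) (f₁ : ℝ) (hf₁ : f₁ ∈ Set.Ioo (-1 : ℝ) 1) :
    ∃ f : ℝ → ℝ, ContDiff ℝ 2 f ∧
      f s₀ = f₀ ∧ deriv f s₀ = f₁ ∧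
      (∀ s : ℝ, deriv f s ∈ Set.Ioo (-1 : ℝ) 1) ∧
      ∀ s : ℝ, deriv (deriv f) s =
        ((deriv f s) ^ 2 - 1) * (1 + ((n : ℝ) - 1) * Real.tanh s * deriv f s) := by
  have hn1 : (0 : ℝ) ≤ (n : ℝ) - 1 := by
    have : (3 : ℝ) ≤ n := by exact_mod_cast hn
    linarith
  have hct := aux_continuous_tanh
  have ex : ∃ u : ℝ → ℝ, u s₀ = Real.artanh f₁ ∧ ∀ t, HasDerivAt u
      (-(1 + ((n : ℝ) - 1) * Real.tanh t * Real.tanh (u t))) t := by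
    refine aux_global
      (fun s x => -(1 + ((n : ℝ) - 1) * Real.tanh s * Real.tanh x))
      ⟨(n : ℝ) - 1, hn1⟩ n ?_ ?_ ?_ s₀ (Real.artanh f₁)
    · intro t
      apply LipschitzWith.of_dist_le_mul
      intro x y
      have h := aux_tanh_lipschitz.dist_le_mul x y
      rw [Real.dist_eq] at h ⊢
      have e : -(1 + ((n : ℝ) - 1) * Real.tanh t * Real.tanh x) -
          -(1 + ((n : ℝ) - 1) * Real.tanh t * Real.tanh y) =
          -(((n : ℝ) - 1) * (Real.tanh t * (Real.tanh x - Real.tanh y))) := by ring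
      rw [e, abs_neg, abs_mul, abs_of_nonneg hn1, abs_mul]
      have h1 := (Real.abs_tanh_lt_one t).le
      simp only [NNReal.coe_one, one_mul] at h
      refine mul_le_mul_of_nonneg_left ?_ hn1
      calc _ ≤ 1 * |Real.tanh x - Real.tanh y| := by gcongr
        _ ≤ _ := by rw [one_mul]; exact h
    · intro x
      fun_prop
    · intro t x
      have h1 := (Real.abs_tanh_lt_one t).le
      have h2 := (Real.abs_tanh_lt_one x).le
      rw [norm_neg, Real.norm_eq_abs, mul_assoc]
      have h3 : |Real.tanh t * Real.tanh x| ≤ 1 := by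
        rw [abs_mul]
        exact mul_le_one₀ h1 (abs_nonneg _) h2
      calc _ ≤ |(1 : ℝ)| + |((n : ℝ) - 1) * (Real.tanh t * Real.tanh x)| := abs_add_le _ _
        _ ≤ 1 + ((n : ℝ) - 1) * 1 := by
          rw [abs_one, abs_mul, abs_of_nonneg hn1]
          gcongr
        _ = _ := by simp
  obtain ⟨u, hu0, hu⟩ := ex
  · have huc : Continuous u := continuous_iff_continuousAt.2 fun x => (hu x).continuousAt
    have hgc : Continuous (fun s => Real.tanh (u s)) := hct.comp huc
    have hf : ∀ s, HasDerivAt (fun s => f₀ + ∫ t in s₀..s, Real.tanh (u t))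
        (Real.tanh (u s)) s := fun s =>
      (intervalIntegral.integral_hasDerivAt_right (hgc.intervalIntegrable _ _)
        (hgc.stronglyMeasurableAtFilter _ _) hgc.continuousAt).const_add f₀
    have hd : deriv (fun s => f₀ + ∫ t in s₀..s, Real.tanh (u t)) =
        fun s => Real.tanh (u s) := funext fun s => (hf s).deriv
    have hg : ∀ s, HasDerivAt (fun s => Real.tanh (u s))
        ((Real.tanh (u s) ^ 2 - 1) *
          (1 + ((n : ℝ) - 1) * Real.tanh s * Real.tanh (u s))) s := by
      intro s
      have := (aux_hasDerivAt_tanh (u s)).comp s (hu s)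
      refine this.congr_deriv ?_
      ring
    have hdd := funext fun s => (hg s).deriv
    refine ⟨fun s => f₀ + ∫ t in s₀..s, Real.tanh (u t), ?_, by simp, ?_, ?_, ?_⟩
    · rw [show (2 : WithTop ℕ∞) = 1 + 1 from by norm_num, contDiff_succ_iff_deriv]
      refine ⟨fun s => (hf s).differentiableAt, by simp, ?_⟩
      rw [hd, contDiff_one_iff_deriv]
      refine ⟨fun s => (hg s).differentiableAt, ?_⟩
      rw [hdd]
      fun_prop
    · rw [hd]
      simp only [hu0]
      exact Real.tanh_artanh hf₁
    · intro s
      rw [hd]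
      exact abs_lt.1 (Real.abs_tanh_lt_one _)
    · intro s
      rw [hd]
      exact (hg s).deriv
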